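/- Main error estimate: if f has an absolutely continuous (r-1)st derivative on [-1,1] with f^{(r-1)}(t) = f^{(r-1)}(-1) + ∫_{-1}^t g(y) dy for an absolutely integrable g of bounded variation V = Var(g) < ∞, then for n ≥ r+1 the Lagrange interpolant at any n distinct nodes in [-1,1] satisfies ‖f - L_n[f]‖_∞ ≤ π^r V / ((n-1)(n-2)···(n-r)) · max_{1≤j≤n} ‖ℓ_j‖_∞. -/

import Mathlib

open Finset MeasureTheory

/-- The `k`-th Lagrange basis polynomial for nodes `x : Fin n → ℝ`. -/
noncomputable def lagBasis {n : ℕ} (x : Fin n → ℝ) (k : Fin n) (t : ℝ) : ℝ :=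
  ∏ j ∈ Finset.univ.erase k, (t - x j) / (x k - x j)

/-- The Lagrange interpolant `L_n[f]`. -/
noncomputable def lagInterp {n : ℕ} (x : Fin n → ℝ) (f : ℝ → ℝ) (t : ℝ) : ℝ :=
  ∑ k, f (x k) * lagBasis x k t

/-!
The interpolation error at `t` is `∫ f' K₁`, where the Peano kernel `K₁ u` is the error at `t` in
interpolating the unit step at `u`. That error is the nodal polynomial times a divided difference of
the step, and divided differences of steps alternate in sign as the jump crosses the nodes, so
`|K₁ u| ≤ |ℓ_j t|` for some `j` (Wainerman). Integrating by parts, the error is `∫ f^{(s)} K_s` with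
`K_{s+1}` the tail integral of `K_s`. Now `K_{s+1}` has Lipschitz constant `sup |K_s|`, vanishes at
`±1` and is orthogonal to the polynomials of degree less than `n - 1 - s`; substituting `u = cos θ`
and extending to an odd function turns this into orthogonality to low frequencies, and convolution
with the Fejér–Korovkin kernel bounds `|K_{s+1}|` by `π / (n - s + 1) * sup |K_s|`. The second mean
value theorem, for `g` of bounded variation, bounds `∫ g K_r` by `Var g * sup |K_{r+1}|`.
-/

section TailIntegral

/-- The tail integral `u ↦ ∫_u^b K`, the antiderivative of `-K` that vanishes at `b`. Iterating it
from the Peano kernel `K₁` produces the kernels `K₁, K₂, …` of the higher-order error formulas. -/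
noncomputable def tailIntegral (b : ℝ) (K : ℝ → ℝ) (u : ℝ) : ℝ := ∫ t in u..b, K t

variable {a b : ℝ} {K : ℝ → ℝ}

lemma tailIntegral_sub_tailIntegral (hK : IntervalIntegrable K volume a b) {s t : ℝ}
    (hs : s ∈ Set.uIcc a b) (ht : t ∈ Set.uIcc a b) :
    tailIntegral b K s - tailIntegral b K t = ∫ u in s..t, K u := by
  have hst := hK.mono_set (Set.uIcc_subset_uIcc hs ht)
  have htb := hK.mono_set (Set.uIcc_subset_uIcc ht Set.right_mem_uIcc)
  rw [tailIntegral, tailIntegral, ← intervalIntegral.integral_add_adjacent_intervals hst htb,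
    add_sub_cancel_right]

lemma abs_tailIntegral_sub_tailIntegral_le (hK : IntervalIntegrable K volume a b) {M : ℝ}
    (hM : ∀ t ∈ Set.uIcc a b, |K t| ≤ M) {s t : ℝ}
    (hs : s ∈ Set.uIcc a b) (ht : t ∈ Set.uIcc a b) :
    |tailIntegral b K s - tailIntegral b K t| ≤ M * |s - t| := by
  rw [tailIntegral_sub_tailIntegral hK hs ht, abs_sub_comm s t,
    ← Real.norm_eq_abs (∫ u in s..t, K u)]
  exact intervalIntegral.norm_integral_le_of_norm_le_const fun u hu =>
    hM u (Set.uIcc_subset_uIcc hs ht (Set.uIoc_subset_uIcc hu))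

lemma tailIntegral_self (b : ℝ) (K : ℝ → ℝ) : tailIntegral b K b = 0 :=
  intervalIntegral.integral_same

lemma continuousOn_tailIntegral (hK : IntervalIntegrable K volume a b) :
    ContinuousOn (tailIntegral b K) (Set.uIcc a b) :=
  (intervalIntegral.continuousOn_primitive_interval' hK Set.right_mem_uIcc).neg.congr fun _ _ =>
    intervalIntegral.integral_symm _ _

lemma integral_mul_eq_integral_mul_tailIntegral {g h : ℝ → ℝ}
    (hg : IntervalIntegrable g volume a b) (hK : IntervalIntegrable K volume a b)
    (hh : ∀ t ∈ Set.uIcc a b, h t = h a + ∫ y in a..t, g y) (hK0 : ∫ t in a..b, K t = 0) :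
    ∫ t in a..b, h t * K t = ∫ t in a..b, g t * tailIntegral b K t := by
  have by_parts :=
    AbsolutelyContinuousOnInterval.integral_mul_deriv_eq_deriv_mul
      (hg.absolutelyContinuousOnInterval_intervalIntegral Set.left_mem_uIcc)
      (hK.absolutelyContinuousOnInterval_intervalIntegral Set.left_mem_uIcc)
  have integral_left : ∫ t in a..b, (∫ y in a..t, g y) * deriv (fun x => ∫ y in a..x, K y) t =
      ∫ t in a..b, (h t * K t - h a * K t) := by
    apply intervalIntegral.integral_congr_ae
    filter_upwards [hK.ae_hasDerivAt_integral] with t ht htm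
    have htm' := Set.uIoc_subset_uIcc htm
    rw [(ht htm' a Set.left_mem_uIcc).deriv, hh t htm']
    ring
  have integral_right : ∫ t in a..b, deriv (fun x => ∫ y in a..x, g y) t * ∫ y in a..t, K y =
      ∫ t in a..b, -(g t * tailIntegral b K t) := by
    apply intervalIntegral.integral_congr_ae
    filter_upwards [hg.ae_hasDerivAt_integral] with t ht htm
    have htm' := Set.uIoc_subset_uIcc htm
    have hKa : tailIntegral b K a = 0 := hK0
    rw [(ht htm' a Set.left_mem_uIcc).deriv,
      ← tailIntegral_sub_tailIntegral hK Set.left_mem_uIcc htm', hKa]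
    ring
  have hcont : ContinuousOn h (Set.uIcc a b) :=
    ((intervalIntegral.continuousOn_primitive_interval' hg Set.left_mem_uIcc).const_add
      (h a)).congr hh
  rw [integral_left, integral_right, intervalIntegral.integral_sub (hK.continuousOn_mul hcont)
    (hK.const_mul _), intervalIntegral.integral_const_mul, hK0, intervalIntegral.integral_neg,
    intervalIntegral.integral_same] at by_parts
  linarith

end TailIntegral

section SecondMeanValue

lemma sum_range_mul_sub_succ {R : Type*} [CommRing R] (u v : ℕ → R) (N : ℕ) :
    ∑ i ∈ range N, u i * (v i - v (i + 1)) =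
      ∑ i ∈ range N, (u (i + 1) - u i) * v (i + 1) + u 0 * v 0 - u N * v N := by
  induction N with
  | zero => simp
  | succ N ih => rw [sum_range_succ, sum_range_succ, ih]; ring

variable {a b : ℝ} {g K : ℝ → ℝ}

lemma intervalIntegrable_of_boundedVariationOn (hg : BoundedVariationOn g (Set.uIcc a b)) :
    IntervalIntegrable g volume a b := by
  obtain ⟨p, q, hp, hq, rfl⟩ := hg.locallyBoundedVariationOn.exists_monotoneOn_sub_monotoneOn
  exact hp.intervalIntegrable.sub hq.intervalIntegrable

lemma intervalIntegrable_mul_of_boundedVariationOn (hg : BoundedVariationOn g (Set.uIcc a b))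
    (hK : IntervalIntegrable K volume a b) :
    IntervalIntegrable (fun t => g t * K t) volume a b := by
  have hgi := intervalIntegrable_of_boundedVariationOn hg
  rw [intervalIntegrable_iff] at hK hgi ⊢
  refine Integrable.bdd_mul (c := |g a| + (eVariationOn g (Set.uIcc a b)).toReal) hK
    hgi.aestronglyMeasurable ((ae_restrict_iff' measurableSet_uIoc).2 (.of_forall fun t ht => ?_))
  have hdist := hg.dist_le (Set.uIoc_subset_uIcc ht) Set.left_mem_uIcc
  rw [Real.dist_eq] at hdist
  rw [Real.norm_eq_abs]
  linarith [abs_sub_abs_le_abs_sub (g t) (g a)]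

lemma abs_integral_sub_left_mul_le (hab : a ≤ b) (hg : BoundedVariationOn g (Set.Icc a b))
    (hK : IntervalIntegrable K volume a b) :
    |∫ t in a..b, (g t - g a) * K t| ≤
      (eVariationOn g (Set.Icc a b)).toReal * ∫ t in a..b, |K t| := by
  rw [← intervalIntegral.integral_const_mul, ← Real.norm_eq_abs (∫ t in a..b, _)]
  refine intervalIntegral.norm_integral_le_of_norm_le hab (.of_forall fun t ht => ?_)
    (hK.abs.const_mul _)
  rw [Real.norm_eq_abs, abs_mul]
  exact mul_le_mul_of_nonneg_right
    (hg.dist_le (Set.Ioc_subset_Icc_self ht) (Set.left_mem_Icc.2 hab)) (abs_nonneg _)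

lemma sum_toReal_eVariationOn_Icc {p : ℕ → ℝ} (hp : Monotone p) {N : ℕ}
    (hg : BoundedVariationOn g (Set.Icc (p 0) (p N))) :
    ∑ i ∈ range N, (eVariationOn g (Set.Icc (p i) (p (i + 1)))).toReal =
      (eVariationOn g (Set.Icc (p 0) (p N))).toReal := by
  rw [← eVariationOn.sum' g hp, ENNReal.toReal_sum fun i hi => hg.mono
    (Set.Icc_subset_Icc (hp (Nat.zero_le i)) (hp (mem_range.1 hi)))]

lemma integral_mul_eq_sum_of_partition {p : ℕ → ℝ} (hp : Monotone p) {N : ℕ}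
    (hgK : IntervalIntegrable (fun t => g t * K t) volume (p 0) (p N))
    (hK : IntervalIntegrable K volume (p 0) (p N)) (hK0 : ∫ t in (p 0)..(p N), K t = 0) :
    ∫ t in (p 0)..(p N), g t * K t =
      ∑ i ∈ range N, ((g (p (i + 1)) - g (p i)) * tailIntegral (p N) K (p (i + 1)) +
        ∫ t in (p i)..(p (i + 1)), (g t - g (p i)) * K t) := by
  set T := tailIntegral (p N) K
  have hmem : ∀ i ≤ N, p i ∈ Set.uIcc (p 0) (p N) := fun i hi =>
    Set.Icc_subset_uIcc ⟨hp (Nat.zero_le i), hp hi⟩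
  have hsub : ∀ i < N, Set.uIcc (p i) (p (i + 1)) ⊆ Set.uIcc (p 0) (p N) := fun i hi =>
    Set.uIcc_subset_uIcc (hmem i hi.le) (hmem (i + 1) hi)
  have piece : ∀ i < N, ∫ t in (p i)..(p (i + 1)), g t * K t =
      g (p i) * (T (p i) - T (p (i + 1))) + ∫ t in (p i)..(p (i + 1)), (g t - g (p i)) * K t := by
    intro i hi
    rw [tailIntegral_sub_tailIntegral hK (hmem i hi.le) (hmem _ hi),
      ← intervalIntegral.integral_const_mul]
    simp_rw [sub_mul]
    rw [intervalIntegral.integral_sub (hgK.mono_set (hsub i hi))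
      ((hK.mono_set (hsub i hi)).const_mul _), add_sub_cancel]
  rw [← intervalIntegral.sum_integral_adjacent_intervals fun i hi => hgK.mono_set (hsub i hi),
    sum_congr rfl fun i hi => piece i (mem_range.1 hi), sum_add_distrib, sum_add_distrib,
    sum_range_mul_sub_succ (fun i => g (p i)), show T (p 0) = 0 from hK0,
    show T (p N) = 0 from tailIntegral_self _ _, mul_zero, mul_zero, add_zero, sub_zero]

lemma abs_integral_mul_le_of_partition {C ε : ℝ} {p : ℕ → ℝ} (hp : Monotone p) {N : ℕ}
    (hg : BoundedVariationOn g (Set.Icc (p 0) (p N)))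
    (hK : IntervalIntegrable K volume (p 0) (p N))
    (hC : ∀ t ∈ Set.Icc (p 0) (p N), |tailIntegral (p N) K t| ≤ C)
    (hK0 : ∫ t in (p 0)..(p N), K t = 0)
    (hε : ∀ i < N, ∫ t in (p i)..(p (i + 1)), |K t| ≤ ε) :
    |∫ t in (p 0)..(p N), g t * K t| ≤
      (C + ε) * (eVariationOn g (Set.Icc (p 0) (p N))).toReal := by
  have hmem : ∀ i ≤ N, p i ∈ Set.Icc (p 0) (p N) := fun i hi => ⟨hp (Nat.zero_le i), hp hi⟩
  have hu : Set.uIcc (p 0) (p N) = Set.Icc (p 0) (p N) := Set.uIcc_of_le (hp (Nat.zero_le N))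
  rw [integral_mul_eq_sum_of_partition hp
    (intervalIntegrable_mul_of_boundedVariationOn (hu ▸ hg) hK) hK hK0,
    ← sum_toReal_eVariationOn_Icc hp hg, mul_sum]
  refine (abs_sum_le_sum_abs _ _).trans (sum_le_sum fun i hi => (abs_add_le _ _).trans ?_)
  have hi := mem_range.1 hi
  have hle : p i ≤ p (i + 1) := hp i.le_succ
  have hgi : BoundedVariationOn g (Set.Icc (p i) (p (i + 1))) :=
    hg.mono (Set.Icc_subset_Icc (hmem i hi.le).1 (hmem _ hi).2)
  have hKi : IntervalIntegrable K volume (p i) (p (i + 1)) :=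
    hK.mono_set (Set.uIcc_subset_uIcc (hu ▸ hmem i hi.le) (hu ▸ hmem _ hi))
  rw [abs_mul, add_mul, mul_comm C, mul_comm ε]
  exact add_le_add
    (mul_le_mul (hgi.dist_le (Set.right_mem_Icc.2 hle) (Set.left_mem_Icc.2 hle))
      (hC _ (hmem _ hi)) (abs_nonneg _) ENNReal.toReal_nonneg)
    ((abs_integral_sub_left_mul_le hle hgi hKi).trans
      (mul_le_mul_of_nonneg_left (hε i hi) ENNReal.toReal_nonneg))

lemma exists_monotone_partition_integral_le (hab : a ≤ b) (hK : IntervalIntegrable K volume a b)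
    {ε : ℝ} (hε : 0 < ε) :
    ∃ (N : ℕ) (p : ℕ → ℝ), Monotone p ∧ p 0 = a ∧ p N = b ∧
      ∀ i < N, ∫ t in (p i)..(p (i + 1)), K t ≤ ε := by
  have huc := isCompact_uIcc.uniformContinuousOn_of_continuous (continuousOn_tailIntegral hK)
  obtain ⟨δ, hδ, hTδ⟩ := Metric.uniformContinuousOn_iff.1 huc ε hε
  obtain ⟨N, hN⟩ := exists_nat_gt ((b - a) / δ)
  have hN0 : (0 : ℝ) < N := (div_nonneg (sub_nonneg.2 hab) hδ.le).trans_lt hN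
  have hstep : (b - a) / N < δ := by rwa [div_lt_comm₀ hN0 hδ]
  set p : ℕ → ℝ := fun i => a + i * ((b - a) / N) with hp_def
  have hp : Monotone p := fun i j hij => by
    have : 0 ≤ (b - a) / N := div_nonneg (sub_nonneg.2 hab) hN0.le
    simp only [hp_def]
    gcongr
  have hp0 : p 0 = a := by simp [hp_def]
  have hpN : p N = b := by simp only [hp_def]; field_simp; ring
  have hmem : ∀ i ≤ N, p i ∈ Set.uIcc a b := fun i hi =>
    Set.Icc_subset_uIcc ⟨hp0 ▸ hp (Nat.zero_le i), hpN ▸ hp hi⟩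
  refine ⟨N, p, hp, hp0, hpN, fun i hi => ?_⟩
  rw [← tailIntegral_sub_tailIntegral hK (hmem i hi.le) (hmem _ hi)]
  refine (le_abs_self _).trans (hTδ _ (hmem i hi.le) _ (hmem _ hi) ?_).le
  have hdiff : p i - p (i + 1) = -((b - a) / N) := by simp only [hp_def]; push_cast; ring
  rwa [Real.dist_eq, hdiff, abs_neg, abs_of_nonneg (div_nonneg (sub_nonneg.2 hab) hN0.le)]

theorem abs_integral_mul_le_mul_eVariationOn (hab : a ≤ b) {C : ℝ}
    (hg : BoundedVariationOn g (Set.Icc a b)) (hK : IntervalIntegrable K volume a b)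
    (hC : ∀ t ∈ Set.Icc a b, |tailIntegral b K t| ≤ C) (hK0 : ∫ t in a..b, K t = 0) :
    |∫ t in a..b, g t * K t| ≤ C * (eVariationOn g (Set.Icc a b)).toReal := by
  set V := (eVariationOn g (Set.Icc a b)).toReal
  have hV : 0 ≤ V := ENNReal.toReal_nonneg
  refine le_of_forall_pos_le_add fun η hη => ?_
  obtain ⟨N, p, hp, rfl, rfl, hε⟩ :=
    exists_monotone_partition_integral_le hab hK.abs (div_pos hη (by positivity : 0 < V + 1))
  refine (abs_integral_mul_le_of_partition hp hg hK hC hK0 hε).trans ?_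
  rw [add_mul]
  gcongr
  rw [div_mul_eq_mul_div, div_le_iff₀ (by positivity)]
  gcongr
  linarith

end SecondMeanValue

section TrigonometricKernel

/-- The nonnegative trigonometric polynomial `|∑_{k ≤ d} c k * exp (i k y)|²` of degree `d`, used as
a convolution kernel. -/
noncomputable def sqNormTrigPoly (c : ℕ → ℝ) (d : ℕ) (y : ℝ) : ℝ :=
  (∑ k ∈ range (d + 1), c k * Real.cos (k * y)) ^ 2 +
    (∑ k ∈ range (d + 1), c k * Real.sin (k * y)) ^ 2

variable (c : ℕ → ℝ) (d : ℕ) (φ : ℝ)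

lemma sqNormTrigPoly_nonneg (y : ℝ) : 0 ≤ sqNormTrigPoly c d y := by
  unfold sqNormTrigPoly
  positivity

lemma continuous_sqNormTrigPoly : Continuous (sqNormTrigPoly c d) := by
  unfold sqNormTrigPoly
  fun_prop

lemma sqNormTrigPoly_eq_sum_cos (y : ℝ) :
    sqNormTrigPoly c d y = ∑ k ∈ range (d + 1), ∑ l ∈ range (d + 1),
      c k * c l * Real.cos (((k - l : ℤ) : ℝ) * y) := by
  unfold sqNormTrigPoly
  rw [sq, sq, sum_mul_sum, sum_mul_sum, ← sum_add_distrib]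
  refine sum_congr rfl fun k _ => ?_
  rw [← sum_add_distrib]
  refine sum_congr rfl fun l _ => ?_
  push_cast
  rw [sub_mul, Real.cos_sub]
  ring

lemma integral_mul_sqNormTrigPoly {h : ℝ → ℝ} (hh : Continuous h) :
    ∫ θ in -Real.pi..Real.pi, h θ * sqNormTrigPoly c d (φ - θ) =
      ∑ k ∈ range (d + 1), ∑ l ∈ range (d + 1), c k * c l *
        ∫ θ in -Real.pi..Real.pi, h θ * Real.cos (((k - l : ℤ) : ℝ) * (φ - θ)) := by
  simp_rw [sqNormTrigPoly_eq_sum_cos, mul_sum, mul_left_comm (h _)]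
  rw [intervalIntegral.integral_finsetSum
    fun k _ => Continuous.intervalIntegrable (by fun_prop) _ _]
  refine sum_congr rfl fun k _ => ?_
  rw [intervalIntegral.integral_finsetSum
    fun l _ => Continuous.intervalIntegrable (by fun_prop) _ _]
  simp_rw [intervalIntegral.integral_const_mul]

lemma integral_cos_int_mul_sub (m : ℤ) :
    ∫ θ in -Real.pi..Real.pi, Real.cos (m * (φ - θ)) = if m = 0 then 2 * Real.pi else 0 := by
  split_ifs with hm
  · simp [hm, two_mul]
  · have hm' : (m : ℝ) ≠ 0 := by exact_mod_cast hm
    rw [intervalIntegral.integral_comp_sub_left (fun y => Real.cos (m * y)),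
      intervalIntegral.integral_comp_mul_left Real.cos hm', integral_cos, mul_sub, mul_sub,
      mul_neg, sub_neg_eq_add, Real.sin_add, Real.sin_sub, Real.sin_int_mul_pi]
    simp

lemma integral_cos_mul_cos_int_mul_sub (m : ℤ) :
    ∫ θ in -Real.pi..Real.pi, Real.cos (φ - θ) * Real.cos (m * (φ - θ)) =
      (if m = 1 then Real.pi else 0) + if m = -1 then Real.pi else 0 := by
  have product_to_sum : ∀ θ, Real.cos (φ - θ) * Real.cos (m * (φ - θ)) =
      (Real.cos ((m - 1 : ℤ) * (φ - θ)) + Real.cos ((m + 1 : ℤ) * (φ - θ))) / 2 := fun θ => by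
    push_cast
    rw [sub_one_mul, add_one_mul, Real.cos_sub (m * (φ - θ)), Real.cos_add]
    ring
  simp_rw [product_to_sum]
  rw [intervalIntegral.integral_div, intervalIntegral.integral_add
    (Continuous.intervalIntegrable (by fun_prop) _ _)
    (Continuous.intervalIntegrable (by fun_prop) _ _),
    integral_cos_int_mul_sub, integral_cos_int_mul_sub]
  simp only [sub_eq_zero, ← eq_neg_iff_add_eq_zero]
  split_ifs <;> ring

lemma integral_sqNormTrigPoly :
    ∫ θ in -Real.pi..Real.pi, sqNormTrigPoly c d (φ - θ) =
      2 * Real.pi * ∑ k ∈ range (d + 1), c k ^ 2 := by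
  have h := integral_mul_sqNormTrigPoly c d φ (h := fun _ => 1) continuous_const
  simp only [one_mul] at h
  simp_rw [h, integral_cos_int_mul_sub, sub_eq_zero, Nat.cast_inj, mul_ite, mul_zero]
  rw [mul_sum]
  refine sum_congr rfl fun k hk => ?_
  rw [sum_ite_eq, if_pos hk]
  ring

lemma integral_cos_mul_sqNormTrigPoly :
    ∫ θ in -Real.pi..Real.pi, Real.cos (φ - θ) * sqNormTrigPoly c d (φ - θ) =
      2 * Real.pi * ∑ k ∈ range d, c k * c (k + 1) := by
  rw [integral_mul_sqNormTrigPoly c d φ (by fun_prop)]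
  have h1 : ∀ k l : ℕ, (k : ℤ) - l = 1 ↔ k = l + 1 := fun k l => by omega
  have h2 : ∀ k l : ℕ, (k : ℤ) - l = -1 ↔ l = k + 1 := fun k l => by omega
  simp_rw [integral_cos_mul_cos_int_mul_sub, h1, h2, mul_add, mul_ite, mul_zero, sum_add_distrib]
  rw [sum_comm]
  simp_rw [sum_ite_eq', mem_range, add_lt_add_iff_right]
  rw [← sum_add_distrib, sum_range_succ, if_neg (lt_irrefl d),
    if_neg (lt_irrefl d), add_zero, add_zero, mul_sum]
  refine sum_congr rfl fun k hk => ?_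
  rw [if_pos (mem_range.1 hk), if_pos (mem_range.1 hk)]
  ring

lemma integral_sub_mul_cos_mul_sqNormTrigPoly (p q : ℝ) :
    ∫ θ in -Real.pi..Real.pi, (p - q * Real.cos (φ - θ)) * sqNormTrigPoly c d (φ - θ) =
      2 * Real.pi * (p * ∑ k ∈ range (d + 1), c k ^ 2 - q * ∑ k ∈ range d, c k * c (k + 1)) := by
  have hJ := continuous_sqNormTrigPoly c d
  simp_rw [sub_mul, mul_assoc]
  rw [intervalIntegral.integral_sub (Continuous.intervalIntegrable (by fun_prop) _ _)
    (Continuous.intervalIntegrable (by fun_prop) _ _), intervalIntegral.integral_const_mul,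
    intervalIntegral.integral_const_mul, integral_sqNormTrigPoly, integral_cos_mul_sqNormTrigPoly]
  ring

variable {φ} {d}

lemma integral_mul_sqNormTrigPoly_eq_zero {F : ℝ → ℝ} (hF : Continuous F)
    (horth : ∀ m ≤ d, ∫ θ in -Real.pi..Real.pi, F θ * Real.cos (m * (φ - θ)) = 0) :
    ∫ θ in -Real.pi..Real.pi, F θ * sqNormTrigPoly c d (φ - θ) = 0 := by
  rw [integral_mul_sqNormTrigPoly c d φ hF]
  refine sum_eq_zero fun k hk => sum_eq_zero fun l hl => ?_
  have hcos : ∀ y : ℝ, Real.cos (((k - l : ℤ) : ℝ) * y) =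
      Real.cos (((k - l : ℤ).natAbs : ℝ) * y) := fun y => by
    rw [Nat.cast_natAbs, Int.cast_abs]
    rcases abs_choice ((k - l : ℤ) : ℝ) with h | h <;> rw [h]
    rw [neg_mul, Real.cos_neg]
  simp_rw [hcos]
  rw [horth _ (by have := mem_range.1 hk; have := mem_range.1 hl; omega), mul_zero]

end TrigonometricKernel

section FavardEstimate

lemma one_sub_cos_eq (y : ℝ) : 1 - Real.cos y = 2 * Real.sin (y / 2) ^ 2 := by
  rw [Real.sin_sq_eq_half_sub, mul_div_cancel₀ y two_ne_zero]
  ring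

lemma two_mul_abs_sin_half_le {σ : ℝ} (hσ : 0 < σ) (y : ℝ) :
    2 * |Real.sin (y / 2)| ≤ (1 - Real.cos y) / (2 * σ) + σ := by
  rw [one_sub_cos_eq, ← sq_abs (Real.sin (y / 2)), mul_div_mul_left _ _ two_ne_zero,
    ← sub_nonneg]
  have square : |Real.sin (y / 2)| ^ 2 / σ + σ - 2 * |Real.sin (y / 2)| =
      (|Real.sin (y / 2)| - σ) ^ 2 / σ := by field_simp; ring
  rw [square]
  positivity

variable {F : ℝ → ℝ} {M φ : ℝ} {d : ℕ}

lemma abs_mul_sum_sq_le (c : ℕ → ℝ) {σ : ℝ} (hσ : 0 < σ) (hM : 0 ≤ M) (hF : Continuous F)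
    (hlip : ∀ θ, |F φ - F θ| ≤ M * (2 * |Real.sin ((φ - θ) / 2)|))
    (horth : ∀ m ≤ d, ∫ θ in -Real.pi..Real.pi, F θ * Real.cos (m * (φ - θ)) = 0) :
    |F φ| * ∑ k ∈ range (d + 1), c k ^ 2 ≤
      M * ((∑ k ∈ range (d + 1), c k ^ 2 - ∑ k ∈ range d, c k * c (k + 1)) / (2 * σ) +
        σ * ∑ k ∈ range (d + 1), c k ^ 2) := by
  have hpi : -Real.pi ≤ Real.pi := by linarith [Real.pi_pos]
  set J := sqNormTrigPoly c d
  have hJ : Continuous J := continuous_sqNormTrigPoly c d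
  have hJ0 : ∀ y, 0 ≤ J y := sqNormTrigPoly_nonneg c d
  have reproduce : ∫ θ in -Real.pi..Real.pi, (F φ - F θ) * J (φ - θ) =
      2 * Real.pi * (F φ * ∑ k ∈ range (d + 1), c k ^ 2) := by
    simp_rw [sub_mul]
    rw [intervalIntegral.integral_sub (Continuous.intervalIntegrable (by fun_prop) _ _)
      (Continuous.intervalIntegrable (by fun_prop) _ _),
      integral_mul_sqNormTrigPoly_eq_zero c hF horth, intervalIntegral.integral_const_mul,
      integral_sqNormTrigPoly]
    ring
  have majorant : ∫ θ in -Real.pi..Real.pi,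
      M * ((1 - Real.cos (φ - θ)) / (2 * σ) + σ) * J (φ - θ) =
      2 * Real.pi * (M * ((∑ k ∈ range (d + 1), c k ^ 2 - ∑ k ∈ range d, c k * c (k + 1)) /
        (2 * σ) + σ * ∑ k ∈ range (d + 1), c k ^ 2)) := by
    convert integral_sub_mul_cos_mul_sqNormTrigPoly c d φ (M * (1 / (2 * σ) + σ)) (M / (2 * σ))
      using 1
    · congr with θ
      ring
    · ring
  have bound : |∫ θ in -Real.pi..Real.pi, (F φ - F θ) * J (φ - θ)| ≤
      ∫ θ in -Real.pi..Real.pi, M * ((1 - Real.cos (φ - θ)) / (2 * σ) + σ) * J (φ - θ) := by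
    rw [← Real.norm_eq_abs (∫ θ in -Real.pi..Real.pi, _)]
    refine intervalIntegral.norm_integral_le_of_norm_le hpi (.of_forall fun θ _ => ?_)
      (Continuous.intervalIntegrable (by fun_prop) _ _)
    rw [Real.norm_eq_abs, abs_mul, abs_of_nonneg (hJ0 _)]
    exact mul_le_mul_of_nonneg_right ((hlip θ).trans
      (mul_le_mul_of_nonneg_left (two_mul_abs_sin_half_le hσ _) hM)) (hJ0 _)
  rw [reproduce, majorant, abs_mul, abs_of_pos Real.two_pi_pos, abs_mul,
    abs_of_nonneg (sum_nonneg fun k _ => sq_nonneg (c k))] at bound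
  exact le_of_mul_le_mul_left bound Real.two_pi_pos

lemma sum_sin_mul_sin_succ (α : ℝ) (N : ℕ) :
    ∑ k ∈ range N, Real.sin ((k + 1) * α) * Real.sin ((k + 2) * α) =
      Real.cos α * ∑ k ∈ range N, Real.sin ((k + 1) * α) ^ 2 +
        Real.sin (N * α) * Real.sin ((N + 1) * α) / 2 := by
  induction N with
  | zero => simp
  | succ N ih =>
    rw [sum_range_succ, sum_range_succ, ih]
    push_cast
    have hprev : (N : ℝ) * α = (N + 1) * α - α := by ring
    have hnext : ((N : ℝ) + 2) * α = (N + 1) * α + α := by ring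
    have hsucc : ((N : ℝ) + 1 + 1) * α = (N + 1) * α + α := by ring
    rw [hnext, hsucc, hprev, Real.sin_sub, Real.sin_add]
    ring

/-- The Fejér–Korovkin coefficients of degree `d`: they maximize
`∑_{k < d} c k * c (k + 1)` among the coefficients with prescribed `∑_{k ≤ d} c k ^ 2`. -/
noncomputable def fejerKorovkinCoeff (d k : ℕ) : ℝ := Real.sin ((k + 1) * (Real.pi / (d + 2)))

lemma sum_fejerKorovkinCoeff_mul_succ (d : ℕ) :
    ∑ k ∈ range d, fejerKorovkinCoeff d k * fejerKorovkinCoeff d (k + 1) =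
      Real.cos (Real.pi / (d + 2)) * ∑ k ∈ range (d + 1), fejerKorovkinCoeff d k ^ 2 := by
  have hlast : Real.sin (((d : ℝ) + 2) * (Real.pi / (d + 2))) = 0 := by
    rw [mul_div_cancel₀ _ (by positivity), Real.sin_pi]
  have h := sum_sin_mul_sin_succ (Real.pi / (d + 2)) (d + 1)
  rw [sum_range_succ] at h
  push_cast at h
  rw [add_assoc (d : ℝ) 1 1, one_add_one_eq_two, hlast, mul_zero, zero_div, add_zero,
    add_zero] at h
  rw [← show _ = Real.cos _ * ∑ k ∈ range (d + 1), fejerKorovkinCoeff d k ^ 2 from h]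
  refine sum_congr rfl fun k _ => ?_
  rw [fejerKorovkinCoeff, fejerKorovkinCoeff]
  push_cast
  rw [add_assoc (k : ℝ) 1 1, one_add_one_eq_two]

lemma sum_sq_fejerKorovkinCoeff_pos (d : ℕ) :
    0 < ∑ k ∈ range (d + 1), fejerKorovkinCoeff d k ^ 2 := by
  refine sum_pos (fun k hk => pow_pos (Real.sin_pos_of_pos_of_lt_pi (by positivity) ?_) 2)
    ⟨0, mem_range.2 d.succ_pos⟩
  have hk' : (k : ℝ) + 1 < d + 2 := by exact_mod_cast Nat.succ_lt_succ (mem_range.1 hk)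
  rw [mul_div_left_comm]
  exact mul_lt_of_lt_one_right Real.pi_pos ((div_lt_one (by positivity)).2 hk')

lemma continuous_of_abs_sub_le_chord (hM : 0 ≤ M)
    (hlip : ∀ s t, |F s - F t| ≤ M * (2 * |Real.sin ((s - t) / 2)|)) : Continuous F := by
  refine (LipschitzWith.of_dist_le_mul (K := M.toNNReal) fun s t => ?_).continuous
  rw [Real.dist_eq, Real.dist_eq, Real.coe_toNNReal _ hM]
  refine (hlip s t).trans (mul_le_mul_of_nonneg_left ?_ hM)
  have h := Real.abs_sin_le_abs (x := (s - t) / 2)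
  rw [abs_div, abs_two] at h
  linarith

/-- A Favard-type estimate; the modulus of continuity is measured by the chord
`2|sin ((s - t) / 2)|` because that makes `F` automatically `2π`-periodic. -/
theorem abs_le_of_forall_integral_mul_cos_eq_zero
    (hlip : ∀ s t, |F s - F t| ≤ M * (2 * |Real.sin ((s - t) / 2)|))
    (horth : ∀ m ≤ d, ∀ s, ∫ θ in -Real.pi..Real.pi, F θ * Real.cos (m * (s - θ)) = 0) (φ : ℝ) :
    |F φ| ≤ Real.pi / (d + 2) * M := by
  have hM : 0 ≤ M := by
    have h := (abs_nonneg _).trans (hlip Real.pi 0)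
    rw [sub_zero, Real.sin_pi_div_two, abs_one] at h
    linarith
  have hF := continuous_of_abs_sub_le_chord hM hlip
  set α := Real.pi / ((d : ℝ) + 2)
  have hα0 : 0 < α := by positivity
  have hαpi : α ≤ Real.pi := div_le_self Real.pi_pos.le (by linarith [Nat.cast_nonneg (α := ℝ) d])
  set σ := Real.sin (α / 2)
  have hσ : 0 < σ := Real.sin_pos_of_pos_of_lt_pi (by linarith) (by linarith)
  have hσα : 2 * σ ≤ α := by linarith [Real.sin_le (by linarith : 0 ≤ α / 2)]
  have key := abs_mul_sum_sq_le (fejerKorovkinCoeff d) hσ hM hF (hlip φ) fun m hm => horth m hm φ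
  rw [sum_fejerKorovkinCoeff_mul_succ, ← one_sub_mul, one_sub_cos_eq] at key
  set S := ∑ k ∈ range (d + 1), fejerKorovkinCoeff d k ^ 2
  have hS0 : 0 < S := sum_sq_fejerKorovkinCoeff_pos d
  have optimum : M * (2 * σ ^ 2 * S / (2 * σ) + σ * S) = 2 * σ * M * S := by field_simp; ring
  exact (le_of_mul_le_mul_right (key.trans_eq optimum) hS0).trans
    (mul_le_mul_of_nonneg_right hσα hM)

end FavardEstimate

section VanishingMoments

/-- `K` is integrable on `[a, b]` and orthogonal there to the polynomials of degree less than `m`;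
each tail integral of the Peano kernel costs one order `m`. -/
structure HasVanishingMoments (a b : ℝ) (m : ℕ) (K : ℝ → ℝ) : Prop where
  intervalIntegrable : IntervalIntegrable K volume a b
  integral_pow_mul : ∀ k < m, ∫ t in a..b, t ^ k * K t = 0

namespace HasVanishingMoments

variable {a b : ℝ} {m : ℕ} {K : ℝ → ℝ}

lemma integral_eq_zero (hK : HasVanishingMoments a b m K) (hm : 0 < m) :
    ∫ t in a..b, K t = 0 := by
  simpa only [pow_zero, one_mul] using hK.integral_pow_mul 0 hm

lemma integral_eval_mul (hK : HasVanishingMoments a b m K) {p : Polynomial ℝ}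
    (hp : p.natDegree < m) : ∫ t in a..b, p.eval t * K t = 0 := by
  simp_rw [Polynomial.eval_eq_sum_range, sum_mul, mul_assoc]
  rw [intervalIntegral.integral_finsetSum fun k _ =>
    (hK.intervalIntegrable.continuousOn_mul (by fun_prop)).const_mul _]
  refine sum_eq_zero fun k hk => ?_
  rw [intervalIntegral.integral_const_mul,
    hK.integral_pow_mul k ((Nat.lt_succ_iff.1 (mem_range.1 hk)).trans_lt hp), mul_zero]

protected lemma tailIntegral (hK : HasVanishingMoments a b (m + 1) K) :
    HasVanishingMoments a b m (tailIntegral b K) where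
  intervalIntegrable := (continuousOn_tailIntegral hK.intervalIntegrable).intervalIntegrable
  integral_pow_mul k hk := by
    have primitive : ∀ t ∈ Set.uIcc a b,
        t ^ (k + 1) / (k + 1) = a ^ (k + 1) / (k + 1) + ∫ y in a..t, y ^ k := fun t _ => by
      rw [integral_pow]
      ring
    rw [← integral_mul_eq_integral_mul_tailIntegral
      (Continuous.intervalIntegrable (by fun_prop) _ _) hK.intervalIntegrable primitive
      (hK.integral_eq_zero m.succ_pos)]
    simp_rw [div_mul_eq_mul_div]
    rw [intervalIntegral.integral_div, hK.integral_pow_mul _ (by omega), zero_div]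

lemma iterate_tailIntegral {s : ℕ} (hK : HasVanishingMoments a b m K) (hs : s ≤ m) :
    HasVanishingMoments a b (m - s) ((_root_.tailIntegral b)^[s] K) := by
  induction s with
  | zero => exact hK
  | succ s ih =>
    have h := ih (by omega)
    rw [← Nat.sub_add_cancel (Nat.sub_pos_of_lt hs), Nat.sub_sub] at h
    rw [Function.iterate_succ_apply']
    exact h.tailIntegral

end HasVanishingMoments

end VanishingMoments

section RecursionBound

/-- The odd `2π`-periodic extension of `θ ↦ κ (cos θ)` from `[0, π]`, for `κ` vanishing at `±1`. -/
noncomputable def oddCosExtension (κ : ℝ → ℝ) (θ : ℝ) : ℝ :=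
  if 0 ≤ Real.sin θ then κ (Real.cos θ) else -κ (Real.cos θ)

variable {κ : ℝ → ℝ} {M : ℝ} {d : ℕ}

lemma oddCosExtension_neg (h1 : κ 1 = 0) (hm1 : κ (-1) = 0) (θ : ℝ) :
    oddCosExtension κ (-θ) = -oddCosExtension κ θ := by
  unfold oddCosExtension
  rw [Real.sin_neg, Real.cos_neg]
  rcases lt_trichotomy (Real.sin θ) 0 with h | h | h
  · rw [if_pos (by linarith), if_neg (by linarith), neg_neg]
  · rcases Real.sin_eq_zero_iff_cos_eq.1 h with hc | hc <;> simp [h, hc, h1, hm1]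
  · rw [if_neg (by linarith), if_pos h.le]

lemma abs_cos_sub_cos_le (s t : ℝ) :
    |Real.cos s - Real.cos t| ≤ 2 * |Real.sin ((s - t) / 2)| := by
  rw [Real.cos_sub_cos, abs_mul, abs_mul, abs_neg, abs_two]
  exact mul_le_mul_of_nonneg_right
    (mul_le_of_le_one_right zero_le_two (Real.abs_sin_le_one _)) (abs_nonneg _)

lemma two_sub_abs_cos_add_cos_le {s t : ℝ} (h : Real.sin s * Real.sin t ≤ 0) :
    2 - |Real.cos s + Real.cos t| ≤ 2 * |Real.sin ((s - t) / 2)| := by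
  have hcos : |Real.cos ((s - t) / 2)| ≤ |Real.cos ((s + t) / 2)| := by
    rw [← sq_le_sq, Real.cos_sq, Real.cos_sq, mul_div_cancel₀ _ two_ne_zero,
      mul_div_cancel₀ _ two_ne_zero, Real.cos_sub, Real.cos_add]
    linarith
  have hprod : |Real.cos ((s - t) / 2)| ^ 2 ≤
      |Real.cos ((s + t) / 2)| * |Real.cos ((s - t) / 2)| := by
    rw [sq]
    exact mul_le_mul_of_nonneg_right hcos (abs_nonneg _)
  rw [sq_abs, Real.cos_sq'] at hprod
  have hsin : Real.sin ((s - t) / 2) ^ 2 ≤ |Real.sin ((s - t) / 2)| := by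
    rw [← sq_abs, sq]
    exact mul_le_of_le_one_left (abs_nonneg _) (Real.abs_sin_le_one _)
  rw [Real.cos_add_cos, abs_mul, abs_mul, abs_two]
  linarith

lemma abs_oddCosExtension_sub_le (hM : 0 ≤ M)
    (hlip : ∀ u ∈ Set.Icc (-1 : ℝ) 1, ∀ v ∈ Set.Icc (-1 : ℝ) 1, |κ u - κ v| ≤ M * |u - v|)
    (h1 : κ 1 = 0) (hm1 : κ (-1) = 0) (s t : ℝ) :
    |oddCosExtension κ s - oddCosExtension κ t| ≤ M * (2 * |Real.sin ((s - t) / 2)|) := by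
  have same_sign : |κ (Real.cos s) - κ (Real.cos t)| ≤ M * (2 * |Real.sin ((s - t) / 2)|) :=
    (hlip _ (Real.cos_mem_Icc s) _ (Real.cos_mem_Icc t)).trans
      (mul_le_mul_of_nonneg_left (abs_cos_sub_cos_le s t) hM)
  have le_one_sub : ∀ θ, |κ (Real.cos θ)| ≤ M * (1 - Real.cos θ) := fun θ => by
    have h := hlip _ (Real.cos_mem_Icc θ) 1 (by norm_num)
    rwa [h1, sub_zero, abs_sub_comm, abs_of_nonneg (sub_nonneg.2 (Real.cos_le_one θ))] at h
  have le_one_add : ∀ θ, |κ (Real.cos θ)| ≤ M * (1 + Real.cos θ) := fun θ => by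
    have h := hlip _ (Real.cos_mem_Icc θ) (-1) (by norm_num)
    rwa [hm1, sub_zero, sub_neg_eq_add, add_comm (Real.cos θ),
      abs_of_nonneg (neg_le_iff_add_nonneg'.1 (Real.neg_one_le_cos θ))] at h
  have opposite_sign (h : Real.sin s * Real.sin t ≤ 0) :
      |κ (Real.cos s)| + |κ (Real.cos t)| ≤ M * (2 * |Real.sin ((s - t) / 2)|) := by
    refine le_trans ?_ (mul_le_mul_of_nonneg_left (two_sub_abs_cos_add_cos_le h) hM)
    rcases abs_choice (Real.cos s + Real.cos t) with hc | hc <;> rw [hc]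
    · linarith [le_one_sub s, le_one_sub t]
    · linarith [le_one_add s, le_one_add t]
  unfold oddCosExtension
  split_ifs with hs ht ht
  · exact same_sign
  · rw [sub_neg_eq_add]
    exact (abs_add_le _ _).trans
      (opposite_sign (mul_nonpos_of_nonneg_of_nonpos hs (not_le.1 ht).le))
  · rw [← neg_add', abs_neg]
    exact (abs_add_le _ _).trans
      (opposite_sign (mul_nonpos_of_nonpos_of_nonneg (not_le.1 hs).le ht))
  · rwa [neg_sub_neg, abs_sub_comm]

lemma integral_symmetric_eq_integral_add_neg {F : ℝ → ℝ} (hF : Continuous F) (c : ℝ) :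
    ∫ θ in -c..c, F θ = ∫ θ in 0..c, (F θ + F (-θ)) := by
  rw [intervalIntegral.integral_add (hF.intervalIntegrable _ _)
    (Continuous.intervalIntegrable (by fun_prop) _ _), intervalIntegral.integral_comp_neg F,
    neg_zero, add_comm, intervalIntegral.integral_add_adjacent_intervals (hF.intervalIntegrable _ _)
      (hF.intervalIntegrable _ _)]

lemma integral_oddCosExtension_mul_cos (h1 : κ 1 = 0) (hm1 : κ (-1) = 0)
    (hc : Continuous (oddCosExtension κ)) (m s : ℝ) :
    ∫ θ in -Real.pi..Real.pi, oddCosExtension κ θ * Real.cos (m * (s - θ)) =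
      2 * Real.sin (m * s) * ∫ θ in 0..Real.pi, κ (Real.cos θ) * Real.sin (m * θ) := by
  rw [integral_symmetric_eq_integral_add_neg (by fun_prop), ← intervalIntegral.integral_const_mul]
  refine intervalIntegral.integral_congr fun θ hθ => ?_
  rw [Set.uIcc_of_le Real.pi_pos.le] at hθ
  have hpos : oddCosExtension κ θ = κ (Real.cos θ) :=
    if_pos (Real.sin_nonneg_of_nonneg_of_le_pi hθ.1 hθ.2)
  rw [oddCosExtension_neg h1 hm1, hpos, sub_neg_eq_add, mul_sub, mul_add, Real.cos_sub,
    Real.cos_add]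
  ring

/-- The substitution `u = cos θ` turns `U_{m-1} du` into `sin (m θ) dθ`. -/
lemma integral_comp_cos_mul_sin_eq_zero (hκ : ContinuousOn κ (Set.Icc (-1) 1))
    (horth : HasVanishingMoments (-1) 1 d κ) {m : ℕ} (hm : m ≤ d) :
    ∫ θ in 0..Real.pi, κ (Real.cos θ) * Real.sin (m * θ) = 0 := by
  obtain _ | j := m
  · simp
  set U := Polynomial.Chebyshev.U ℝ j
  have hU : ∫ u in (-1 : ℝ)..1, U.eval u * κ u = 0 :=
    horth.integral_eval_mul (by rw [Polynomial.Chebyshev.natDegree_U]; omega)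
  have hcont : ContinuousOn (fun u => U.eval u * κ u) (Real.cos '' Set.uIcc 0 Real.pi) :=
    U.continuous.continuousOn.mul
      (hκ.mono (Set.image_subset_iff.2 fun θ _ => Real.cos_mem_Icc θ))
  have substitution := intervalIntegral.integral_comp_mul_deriv'
    (fun θ _ => Real.hasDerivAt_cos θ) (by fun_prop) hcont
  rw [Real.cos_zero, Real.cos_pi, intervalIntegral.integral_symm (-1), hU, neg_zero] at substitution
  have integrand : ∀ θ, ((fun u => U.eval u * κ u) ∘ Real.cos) θ * -Real.sin θ =
      -(κ (Real.cos θ) * Real.sin ((j + 1 : ℕ) * θ)) := fun θ => by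
    have hsin := Polynomial.Chebyshev.U_real_cos θ j
    push_cast at hsin ⊢
    rw [Function.comp_apply, ← hsin]
    ring
  simp_rw [integrand] at substitution
  rwa [intervalIntegral.integral_neg, neg_eq_zero] at substitution

theorem abs_le_of_hasVanishingMoments_of_lipschitz
    (hlip : ∀ u ∈ Set.Icc (-1 : ℝ) 1, ∀ v ∈ Set.Icc (-1 : ℝ) 1, |κ u - κ v| ≤ M * |u - v|)
    (h1 : κ 1 = 0) (hm1 : κ (-1) = 0) (horth : HasVanishingMoments (-1) 1 d κ)
    {u : ℝ} (hu : u ∈ Set.Icc (-1 : ℝ) 1) :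
    |κ u| ≤ Real.pi / (d + 2) * M := by
  have hM : 0 ≤ M := by
    have h := (abs_nonneg _).trans (hlip 1 (by norm_num) (-1) (by norm_num))
    rw [sub_neg_eq_add, one_add_one_eq_two, abs_two] at h
    linarith
  have hκ : ContinuousOn κ (Set.Icc (-1) 1) :=
    (LipschitzOnWith.of_dist_le_mul (K := M.toNNReal) fun s hs t ht => by
      rw [Real.dist_eq, Real.dist_eq, Real.coe_toNNReal _ hM]
      exact hlip s hs t ht).continuousOn
  have hchord := abs_oddCosExtension_sub_le hM hlip h1 hm1
  have hF := continuous_of_abs_sub_le_chord hM hchord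
  have h := abs_le_of_forall_integral_mul_cos_eq_zero (d := d) hchord (fun m hm s => by
    rw [integral_oddCosExtension_mul_cos h1 hm1 hF, integral_comp_cos_mul_sin_eq_zero hκ horth hm,
      mul_zero]) (Real.arccos u)
  rwa [oddCosExtension, Real.cos_arccos hu.1 hu.2,
    if_pos (Real.sin_nonneg_of_nonneg_of_le_pi (Real.arccos_nonneg u) (Real.arccos_le_pi u))] at h

lemma abs_tailIntegral_le {m : ℕ} {K : ℝ → ℝ} (hK : HasVanishingMoments (-1) 1 (m + 1) K)
    (hM : ∀ t ∈ Set.Icc (-1 : ℝ) 1, |K t| ≤ M) {u : ℝ} (hu : u ∈ Set.Icc (-1 : ℝ) 1) :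
    |tailIntegral 1 K u| ≤ Real.pi / (m + 2) * M := by
  have hI : Set.uIcc (-1 : ℝ) 1 = Set.Icc (-1) 1 := Set.uIcc_of_le (by norm_num)
  exact abs_le_of_hasVanishingMoments_of_lipschitz
    (fun s hs t ht => abs_tailIntegral_sub_tailIntegral_le hK.intervalIntegrable (hI ▸ hM)
      (hI ▸ hs) (hI ▸ ht))
    (tailIntegral_self 1 K) (hK.integral_eq_zero m.succ_pos) hK.tailIntegral hu

lemma abs_iterate_tailIntegral_le {m s : ℕ} {K : ℝ → ℝ} (hK : HasVanishingMoments (-1) 1 m K)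
    (hM : ∀ t ∈ Set.Icc (-1 : ℝ) 1, |K t| ≤ M) (hs : s ≤ m) :
    ∀ u ∈ Set.Icc (-1 : ℝ) 1,
      |(tailIntegral 1)^[s] K u| ≤ (∏ i ∈ range s, Real.pi / (m + 1 - i)) * M := by
  induction s with
  | zero => simpa using hM
  | succ s ih =>
    intro u hu
    obtain ⟨k, rfl⟩ := Nat.exists_eq_add_of_le' hs
    have hKs := hK.iterate_tailIntegral (s := s) (by omega)
    rw [show k + (s + 1) - s = k + 1 by omega] at hKs
    rw [Function.iterate_succ_apply', prod_range_succ, mul_comm (∏ i ∈ range s, _), mul_assoc]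
    convert abs_tailIntegral_le hKs (ih (by omega)) hu using 3
    push_cast
    ring

end RecursionBound

section DividedDifferences

/-- The divided difference of `g` at the nodes `S`, in its symmetric form. -/
noncomputable def dividedDiff {𝕜 : Type*} [Field 𝕜] [DecidableEq 𝕜] (S : Finset 𝕜)
    (g : 𝕜 → 𝕜) : 𝕜 :=
  ∑ y ∈ S, Lagrange.nodalWeight S id y * g y

variable {𝕜 : Type*} [Field 𝕜]

lemma nodalWeight_mul_sub [DecidableEq 𝕜] {S : Finset 𝕜} {a y : 𝕜} (ha : a ∈ S) (hya : y ≠ a) :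
    Lagrange.nodalWeight S id y * (y - a) = Lagrange.nodalWeight (S.erase a) id y := by
  unfold Lagrange.nodalWeight
  rw [erase_right_comm, ← prod_erase_mul (S.erase y) _ (mem_erase.2 ⟨hya.symm, ha⟩), id, id,
    inv_mul_cancel_right₀ (sub_ne_zero.2 hya)]

lemma dividedDiff_mul_sub [DecidableEq 𝕜] {S : Finset 𝕜} {a : 𝕜} (ha : a ∈ S) (g : 𝕜 → 𝕜) :
    dividedDiff S (fun y => (y - a) * g y) = dividedDiff (S.erase a) g := by
  unfold dividedDiff
  rw [← sum_erase (a := a) S (by simp)]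
  refine sum_congr rfl fun y hy => ?_
  rw [← mul_assoc, nodalWeight_mul_sub ha (ne_of_mem_erase hy)]

lemma sub_mul_dividedDiff [DecidableEq 𝕜] {S : Finset 𝕜} {a b : 𝕜} (ha : a ∈ S) (hb : b ∈ S)
    (g : 𝕜 → 𝕜) :
    (b - a) * dividedDiff S g = dividedDiff (S.erase a) g - dividedDiff (S.erase b) g := by
  rw [← dividedDiff_mul_sub ha, ← dividedDiff_mul_sub hb, dividedDiff, dividedDiff, dividedDiff,
    ← sum_sub_distrib, mul_sum]
  exact sum_congr rfl fun y _ => by ring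

lemma dividedDiff_singleton [DecidableEq 𝕜] (a : 𝕜) (g : 𝕜 → 𝕜) : dividedDiff {a} g = g a := by
  simp [dividedDiff, Lagrange.nodalWeight]

lemma dividedDiff_one [DecidableEq 𝕜] {S : Finset 𝕜} (hS : 1 < #S) : dividedDiff S 1 = 0 := by
  have h := Lagrange.coeff_eq_sum (s := S) (v := id) (P := (1 : Polynomial 𝕜))
    Function.injective_id.injOn (by simpa using hS.pos)
  rw [Polynomial.coeff_one, if_neg (by omega)] at h
  rw [h]
  refine sum_congr rfl fun y _ => ?_
  rw [Lagrange.nodalWeight, prod_inv_distrib, Pi.one_apply, Polynomial.eval_one, mul_one, one_div]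

variable [LinearOrder 𝕜]

open Classical in
lemma dividedDiff_indicator_one_eq_add {S : Finset 𝕜} {U W : Set 𝕜} {p : 𝕜} (hpU : p ∉ U)
    (hW : S.filter (· ∈ W) = insert p (S.filter (· ∈ U))) :
    dividedDiff S (W.indicator 1) =
      Lagrange.nodalWeight S id p + dividedDiff S (U.indicator 1) := by
  simp only [dividedDiff, Set.indicator_apply, Pi.one_apply, mul_ite, mul_one, mul_zero]
  rw [← sum_filter, ← sum_filter, hW, sum_insert (by simp [hpU])]

variable [IsStrictOrderedRing 𝕜]

open Classical in
lemma dividedDiff_indicator_one_sign {U : Set 𝕜} (hU : IsUpperSet U) (S : Finset 𝕜) :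
    0 ≤ (-1) ^ (#(S.filter (· ∈ U)) + 1) * dividedDiff S (U.indicator 1) := by
  induction S using Finset.strongInduction with
  | H S ih =>
    by_cases hdisj : ∀ y ∈ S, y ∉ U
    · have : dividedDiff S (U.indicator 1) = 0 := sum_eq_zero fun y hy => by simp [hdisj y hy]
      rw [this, mul_zero]
    by_cases hsub : ∀ y ∈ S, y ∈ U
    · have hone : dividedDiff S (U.indicator 1) = dividedDiff S 1 :=
        sum_congr rfl fun y hy => by simp [hsub y hy]
      rw [hone, filter_true_of_mem hsub]
      rcases lt_or_ge 1 #S with h | h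
      · rw [dividedDiff_one h, mul_zero]
      · obtain ⟨y, hy⟩ : S.Nonempty := by
          by_contra! h
          simp [h] at hdisj
        rw [eq_singleton_iff_unique_mem.2 ⟨hy, fun z hz => card_le_one.1 h z hz y hy⟩,
          dividedDiff_singleton]
        simp
    push Not at hdisj hsub
    obtain ⟨b, hb, hbU⟩ := hdisj
    obtain ⟨a, ha, haU⟩ := hsub
    have hab : 0 < b - a := sub_pos.2 (not_le.1 fun h => haU (hU h hbU))
    have hbT : b ∈ S.filter (· ∈ U) := mem_filter.2 ⟨hb, hbU⟩
    have erase_left := ih _ (erase_ssubset ha)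
    have erase_right := ih _ (erase_ssubset hb)
    rw [filter_erase, erase_eq_of_notMem (by simp [haU])] at erase_left
    rw [filter_erase, card_erase_add_one hbT] at erase_right
    refine nonneg_of_mul_nonneg_right (a := b - a) ?_ hab
    rw [mul_left_comm, sub_mul_dividedDiff ha hb, pow_succ]
    rw [pow_succ] at erase_left
    linarith

open Classical in
lemma abs_dividedDiff_indicator_one_le {S : Finset 𝕜} {U W : Set 𝕜} (hU : IsUpperSet U)
    (hW : IsUpperSet W) {p : 𝕜} (hp : p ∈ S) (hpU : p ∉ U)
    (hUW : ∀ y ∈ S, y ∈ W ↔ y = p ∨ y ∈ U) :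
    |dividedDiff S (U.indicator 1)| ≤ |Lagrange.nodalWeight S id p| ∧
      |dividedDiff S (W.indicator 1)| ≤ |Lagrange.nodalWeight S id p| := by
  have hpW : S.filter (· ∈ W) = insert p (S.filter (· ∈ U)) := by
    rw [filter_congr hUW, filter_or, filter_eq', if_pos hp, insert_eq]
  have hsum := dividedDiff_indicator_one_eq_add hpU hpW
  have hUsign := dividedDiff_indicator_one_sign hU S
  have hWsign := dividedDiff_indicator_one_sign hW S
  rw [hpW, card_insert_of_notMem (by simp [hpU]), pow_succ] at hWsign
  rcases neg_one_pow_eq_or 𝕜 (#(S.filter (· ∈ U)) + 1) with h | h <;> rw [h] at hUsign hWsign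
  · rw [abs_of_nonneg (a := dividedDiff S (U.indicator 1)) (by linarith),
      abs_of_nonpos (a := dividedDiff S (W.indicator 1)) (by linarith)]
    constructor <;> linarith [neg_abs_le (Lagrange.nodalWeight S id p)]
  · rw [abs_of_nonpos (a := dividedDiff S (U.indicator 1)) (by linarith),
      abs_of_nonneg (a := dividedDiff S (W.indicator 1)) (by linarith)]
    constructor <;> linarith [le_abs_self (Lagrange.nodalWeight S id p)]

theorem exists_abs_dividedDiff_indicator_one_le {S : Finset 𝕜} (hS : 1 < #S) {U : Set 𝕜}
    (hU : IsUpperSet U) (x : 𝕜) :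
    ∃ y ∈ S, y ≠ x ∧ |dividedDiff S (U.indicator 1)| ≤ |Lagrange.nodalWeight S id y| := by
  classical
  by_cases hzero : dividedDiff S (U.indicator 1) = 0
  · obtain ⟨y, hy, hyx⟩ := exists_mem_ne hS x
    exact ⟨y, hy, hyx, by simp [hzero]⟩
  have hT : (S.filter (· ∈ U)).Nonempty := by
    by_contra! h
    exact hzero (sum_eq_zero fun y hy => by simp [filter_eq_empty_iff.1 h hy])
  have hT' : (S.filter (· ∉ U)).Nonempty := by
    by_contra! h
    refine hzero ((sum_congr rfl fun y hy => ?_).trans (dividedDiff_one hS))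
    simp [not_not.1 (filter_eq_empty_iff.1 h hy)]
  obtain ⟨p, hp, hpmin⟩ := exists_min_image _ id hT
  obtain ⟨q, hq, hqmax⟩ := exists_max_image _ id hT'
  simp only [mem_filter, id, and_imp] at hp hpmin hq hqmax
  by_cases hpx : p = x
  · refine ⟨q, hq.1, fun h => hq.2 (h ▸ hpx ▸ hp.2), (abs_dividedDiff_indicator_one_le hU
      (isUpperSet_Ici q) hq.1 hq.2 fun y hy => ⟨fun hqy => ?_, ?_⟩).1⟩
    · exact or_iff_not_imp_right.2 fun hyU => (hqmax y hy hyU).antisymm hqy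
    · rintro (rfl | hyU)
      · exact le_rfl
      · exact not_lt.1 fun h => hq.2 (hU h.le hyU)
  · refine ⟨p, hp.1, hpx, (abs_dividedDiff_indicator_one_le (isUpperSet_Ioi p) hU hp.1
      (lt_irrefl p) fun y hy => ⟨fun hyU => ?_, ?_⟩).2⟩
    · exact (hpmin y hy hyU).eq_or_lt.imp_left Eq.symm
    · rintro (rfl | hpy)
      · exact hp.2
      · exact hU (Set.mem_Ioi.1 hpy).le hp.2

end DividedDifferences

section PeanoKernel

variable {n : ℕ} {x : Fin n → ℝ}

lemma lagBasis_eq_eval (x : Fin n → ℝ) (k : Fin n) (t : ℝ) :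
    lagBasis x k t = (Lagrange.basis univ x k).eval t := by
  unfold lagBasis Lagrange.basis Lagrange.basisDivisor
  rw [Polynomial.eval_prod]
  refine prod_congr rfl fun j _ => ?_
  simp [div_eq_inv_mul]

lemma lagInterp_eq_eval_interpolate (x : Fin n → ℝ) (f : ℝ → ℝ) (t : ℝ) :
    lagInterp x f t = (Lagrange.interpolate univ x (f ∘ x)).eval t := by
  simp [lagInterp, Lagrange.interpolate_apply, Polynomial.eval_finsetSum, lagBasis_eq_eval]

lemma lagInterp_apply_node (hx : x.Injective) (f : ℝ → ℝ) (i : Fin n) :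
    lagInterp x f (x i) = f (x i) := by
  rw [lagInterp_eq_eval_interpolate, Lagrange.eval_interpolate_at_node _ hx.injOn (mem_univ i),
    Function.comp_apply]

lemma lagInterp_pow (hx : x.Injective) {k : ℕ} (hk : k < n) (t : ℝ) :
    lagInterp x (· ^ k) t = t ^ k := by
  have h := Lagrange.eq_interpolate (s := univ) (v := x) (f := (Polynomial.X : Polynomial ℝ) ^ k)
    hx.injOn (by simpa using hk)
  rw [lagInterp_eq_eval_interpolate]
  simpa [Function.comp_def] using (congrArg (Polynomial.eval t) h).symm

lemma sum_lagBasis (hx : x.Injective) (hn : 0 < n) (t : ℝ) : ∑ j, lagBasis x j t = 1 := by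
  simpa [lagInterp] using lagInterp_pow hx hn t

lemma prod_sub_mul_nodalWeight {t : ℝ} (hx : x.Injective) (ht : ∀ i, t ≠ x i) (j : Fin n) :
    (∏ i, (t - x i)) * Lagrange.nodalWeight (insert t (univ.image x)) id (x j) =
      -lagBasis x j t := by
  have htX : t ∉ (univ.erase j).image x := by simpa using fun i _ => (ht i).symm
  have hprod : ∏ y ∈ (insert t (univ.image x)).erase (x j), (x j - y)⁻¹ =
      (x j - t)⁻¹ * ∏ i ∈ univ.erase j, (x j - x i)⁻¹ := by
    rw [erase_insert_of_ne (ht j), ← image_erase hx, prod_insert htX, prod_image hx.injOn]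
  simp only [Lagrange.nodalWeight, id]
  rw [hprod, ← mul_prod_erase univ _ (mem_univ j), mul_mul_mul_comm, ← prod_mul_distrib,
    ← neg_sub t (x j), inv_neg, mul_neg, mul_inv_cancel₀ (sub_ne_zero.2 (ht j)), neg_one_mul]
  simp_rw [lagBasis, div_eq_mul_inv]

lemma prod_sub_mul_nodalWeight_self {t : ℝ} (hx : x.Injective) (ht : ∀ i, t ≠ x i) :
    (∏ i, (t - x i)) * Lagrange.nodalWeight (insert t (univ.image x)) id t = 1 := by
  have htX : t ∉ univ.image x := by simpa using fun i => (ht i).symm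
  rw [Lagrange.nodalWeight, erase_insert htX, prod_image hx.injOn, ← prod_mul_distrib]
  exact prod_eq_one fun i _ => mul_inv_cancel₀ (sub_ne_zero.2 (ht i))

lemma sub_lagInterp_eq_prod_mul_dividedDiff {t : ℝ} (hx : x.Injective) (ht : ∀ i, t ≠ x i)
    (f : ℝ → ℝ) :
    f t - lagInterp x f t = (∏ i, (t - x i)) * dividedDiff (insert t (univ.image x)) f := by
  have htX : t ∉ univ.image x := by simpa using fun i => (ht i).symm
  rw [dividedDiff, sum_insert htX, sum_image hx.injOn, mul_add, mul_sum, ← mul_assoc,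
    prod_sub_mul_nodalWeight_self hx ht, one_mul, sub_eq_add_neg, lagInterp, ← sum_neg_distrib]
  refine congrArg _ (sum_congr rfl fun j _ => ?_)
  rw [← mul_assoc, prod_sub_mul_nodalWeight hx ht, neg_mul, mul_comm]

/-- The Peano kernel `K₁` of Lagrange interpolation: the error at `t` in interpolating the unit
step at `u`. -/
noncomputable def peanoKernel (x : Fin n → ℝ) (t u : ℝ) : ℝ :=
  (Set.Ici u).indicator 1 t - lagInterp x ((Set.Ici u).indicator 1) t

theorem exists_abs_peanoKernel_le (hx : x.Injective) (hn : 0 < n) (t u : ℝ) :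
    ∃ j, |peanoKernel x t u| ≤ |lagBasis x j t| := by
  by_cases ht : ∀ i, t ≠ x i
  · have hS : 1 < #(insert t (univ.image x)) := by
      rw [card_insert_of_notMem (by simpa using fun i => (ht i).symm),
        card_image_of_injective _ hx, card_univ, Fintype.card_fin]
      omega
    obtain ⟨y, hy, hyt, hle⟩ := exists_abs_dividedDiff_indicator_one_le hS (isUpperSet_Ici u) t
    obtain ⟨j, -, rfl⟩ := mem_image.1 (mem_of_mem_insert_of_ne hy hyt)
    refine ⟨j, ?_⟩
    rw [peanoKernel, sub_lagInterp_eq_prod_mul_dividedDiff hx ht, ← abs_neg (lagBasis x j t),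
      ← prod_sub_mul_nodalWeight hx ht, abs_mul, abs_mul]
    exact mul_le_mul_of_nonneg_left hle (abs_nonneg _)
  · push Not at ht
    obtain ⟨i, rfl⟩ := ht
    refine ⟨⟨0, hn⟩, ?_⟩
    rw [peanoKernel, lagInterp_apply_node hx, sub_self, abs_zero]
    exact abs_nonneg _

variable {a b : ℝ} {g h : ℝ → ℝ}

lemma mul_indicator_Ici_eq_indicator_Iic (g : ℝ → ℝ) (s : ℝ) :
    (fun u => g u * (Set.Ici u).indicator 1 s) = {u | u ≤ s}.indicator g := by
  ext u
  by_cases hu : u ≤ s <;> simp [hu]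

lemma intervalIntegrable_mul_indicator_Ici (hg : IntervalIntegrable g volume a b) (s : ℝ) :
    IntervalIntegrable (fun u => g u * (Set.Ici u).indicator 1 s) volume a b := by
  rw [mul_indicator_Ici_eq_indicator_Iic]
  exact ⟨hg.1.indicator measurableSet_Iic, hg.2.indicator measurableSet_Iic⟩

lemma integral_mul_indicator_Ici (g : ℝ → ℝ) {s : ℝ} (hs : s ∈ Set.Icc a b) :
    ∫ u in a..b, g u * (Set.Ici u).indicator 1 s = ∫ u in a..s, g u := by
  rw [mul_indicator_Ici_eq_indicator_Iic, intervalIntegral.integral_indicator hs]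

lemma mul_peanoKernel (g : ℝ → ℝ) (x : Fin n → ℝ) (t u : ℝ) :
    g u * peanoKernel x t u = g u * (Set.Ici u).indicator 1 t -
      ∑ j, g u * (Set.Ici u).indicator 1 (x j) * lagBasis x j t := by
  rw [peanoKernel, mul_sub, lagInterp, mul_sum]
  simp_rw [mul_assoc]

lemma intervalIntegrable_peanoKernel (x : Fin n → ℝ) (t a b : ℝ) :
    IntervalIntegrable (peanoKernel x t) volume a b := by
  have hstep : ∀ s, IntervalIntegrable (fun u => (1 : ℝ) * (Set.Ici u).indicator 1 s) volume a b :=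
    intervalIntegrable_mul_indicator_Ici (g := fun _ => 1) intervalIntegrable_const
  have hsum := (hstep t).sub (IntervalIntegrable.sum univ fun j _ =>
    (hstep (x j)).mul_const (lagBasis x j t))
  refine hsum.congr fun u _ => ?_
  rw [← one_mul (peanoKernel x t u), mul_peanoKernel (fun _ => 1), Finset.sum_apply]

theorem sub_lagInterp_eq_integral_mul_peanoKernel (hx : x.Injective) (hn : 0 < n)
    (hmem : ∀ i, x i ∈ Set.Icc a b) (hg : IntervalIntegrable g volume a b)
    (hh : ∀ t ∈ Set.Icc a b, h t = h a + ∫ y in a..t, g y) {t : ℝ} (ht : t ∈ Set.Icc a b) :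
    h t - lagInterp x h t = ∫ u in a..b, g u * peanoKernel x t u := by
  have hint : ∀ j ∈ univ, IntervalIntegrable
      (fun u => g u * (Set.Ici u).indicator 1 (x j) * lagBasis x j t) volume a b := fun j _ =>
    (intervalIntegrable_mul_indicator_Ici hg (x j)).mul_const _
  have hinterp : lagInterp x h t = h a + ∑ j, (∫ y in a..(x j), g y) * lagBasis x j t := by
    rw [lagInterp, sum_congr rfl fun j _ => by rw [hh _ (hmem j)]]
    simp_rw [add_mul]
    rw [sum_add_distrib, ← mul_sum, sum_lagBasis hx hn, mul_one]
  simp_rw [mul_peanoKernel]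
  rw [intervalIntegral.integral_sub (intervalIntegrable_mul_indicator_Ici hg t)
      (by simpa only [sum_fn] using IntervalIntegrable.sum univ hint),
    intervalIntegral.integral_finsetSum hint, integral_mul_indicator_Ici g ht]
  simp_rw [intervalIntegral.integral_mul_const, integral_mul_indicator_Ici g (hmem _)]
  rw [hinterp, hh t ht]
  ring

lemma hasVanishingMoments_peanoKernel (hx : x.Injective) (hmem : ∀ i, x i ∈ Set.Icc a b) {t : ℝ}
    (ht : t ∈ Set.Icc a b) : HasVanishingMoments a b (n - 1) (peanoKernel x t) where
  intervalIntegrable := intervalIntegrable_peanoKernel x t a b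
  integral_pow_mul k hk := by
    have primitive : ∀ s ∈ Set.Icc a b, s ^ (k + 1) = a ^ (k + 1) + ∫ y in a..s, (k + 1) * y ^ k :=
      fun s _ => by
        rw [intervalIntegral.integral_const_mul, integral_pow, mul_div_cancel₀ _ (by positivity)]
        ring
    have h := sub_lagInterp_eq_integral_mul_peanoKernel hx (by omega) hmem
      (Continuous.intervalIntegrable (by fun_prop) _ _) primitive ht
    simp_rw [lagInterp_pow hx (show k + 1 < n by omega), sub_self, mul_assoc] at h
    rw [intervalIntegral.integral_const_mul, eq_comm, mul_eq_zero] at h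
    exact h.resolve_left (by positivity)

end PeanoKernel

section ErrorEstimate

lemma HasVanishingMoments.integral_mul_eq_integral_mul_iterate_tailIntegral {a b : ℝ} {m s : ℕ}
    {K : ℝ → ℝ} {h : ℕ → ℝ → ℝ} (hK : HasVanishingMoments a b m K) (hs : s ≤ m)
    (hint : ∀ i < s, IntervalIntegrable (h (i + 1)) volume a b)
    (hprim : ∀ i < s, ∀ t ∈ Set.uIcc a b, h i t = h i a + ∫ y in a..t, h (i + 1) y) :
    ∫ t in a..b, h 0 t * K t = ∫ t in a..b, h s t * (tailIntegral b)^[s] K t := by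
  induction s with
  | zero => rfl
  | succ s ih =>
    have hKs := hK.iterate_tailIntegral (s := s) (by omega)
    rw [ih (by omega) (fun i hi => hint i (by omega)) (fun i hi => hprim i (by omega)),
      integral_mul_eq_integral_mul_tailIntegral (hint s s.lt_succ_self) hKs.intervalIntegrable
        (hprim s s.lt_succ_self) (hKs.integral_eq_zero (by omega)), Function.iterate_succ_apply']

lemma intervalIntegrable_of_primitive_chain {a b : ℝ} {r : ℕ} {h : ℕ → ℝ → ℝ}
    (hr : IntervalIntegrable (h r) volume a b)
    (hprim : ∀ i < r, ∀ t ∈ Set.uIcc a b, h i t = h i a + ∫ y in a..t, h (i + 1) y) {i : ℕ}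
    (hi : i ≤ r) : IntervalIntegrable (h i) volume a b := by
  induction hi using Nat.decreasingInduction with
  | self => exact hr
  | of_succ i hi ih =>
    exact (((intervalIntegral.continuousOn_primitive_interval' ih Set.left_mem_uIcc).const_add
      (h i a)).congr (hprim i hi)).intervalIntegrable

/-- Here `h 0, …, h r` stand for `f, f', …, f^{(r-1)}, g`. -/
theorem abs_sub_lagInterp_le_of_primitive_chain {n r : ℕ} {x : Fin n → ℝ} {h : ℕ → ℝ → ℝ} {M : ℝ}
    (hr : 1 ≤ r) (hn : r + 1 ≤ n) (hx : x.Injective) (hmem : ∀ i, x i ∈ Set.Icc (-1 : ℝ) 1)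
    (hBV : BoundedVariationOn (h r) (Set.Icc (-1) 1))
    (hprim : ∀ i < r, ∀ t ∈ Set.Icc (-1 : ℝ) 1, h i t = h i (-1) + ∫ y in (-1)..t, h (i + 1) y)
    {t : ℝ} (ht : t ∈ Set.Icc (-1 : ℝ) 1) (hM : ∀ j, |lagBasis x j t| ≤ M) :
    |h 0 t - lagInterp x (h 0) t| ≤
      (∏ i ∈ range r, Real.pi / (n - i)) * M * (eVariationOn (h r) (Set.Icc (-1) 1)).toReal := by
  obtain ⟨q, rfl⟩ := Nat.exists_eq_add_of_le' hr
  have hI : Set.uIcc (-1 : ℝ) 1 = Set.Icc (-1) 1 := Set.uIcc_of_le (by norm_num)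
  have hint : ∀ i ≤ q + 1, IntervalIntegrable (h i) volume (-1) 1 := fun i hi =>
    intervalIntegrable_of_primitive_chain
      (intervalIntegrable_of_boundedVariationOn (hI.symm ▸ hBV)) (hI.symm ▸ hprim) hi
  have hK := hasVanishingMoments_peanoKernel hx hmem ht
  have hKq := hK.iterate_tailIntegral (s := q) (by omega)
  have peano : h 0 t - lagInterp x (h 0) t =
      ∫ u in (-1)..1, h (q + 1) u * (tailIntegral 1)^[q] (peanoKernel x t) u := by
    rw [sub_lagInterp_eq_integral_mul_peanoKernel hx (by omega) hmem (hint 1 (by omega))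
      (hprim 0 (by omega)) ht]
    exact hK.integral_mul_eq_integral_mul_iterate_tailIntegral (h := fun i => h (i + 1)) (by omega)
      (fun i hi => hint _ (by omega)) fun i hi => hI.symm ▸ hprim (i + 1) (by omega)
  have kernel_bound : ∀ u ∈ Set.Icc (-1 : ℝ) 1, |peanoKernel x t u| ≤ M := fun u _ =>
    let ⟨j, hj⟩ := exists_abs_peanoKernel_le hx (by omega) t u
    hj.trans (hM j)
  have tail_bound : ∀ u ∈ Set.Icc (-1 : ℝ) 1,
      |tailIntegral 1 ((tailIntegral 1)^[q] (peanoKernel x t)) u| ≤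
        (∏ i ∈ range (q + 1), Real.pi / (n - i)) * M := by
    have h := abs_iterate_tailIntegral_le hK kernel_bound (s := q + 1) (by omega)
    rwa [Nat.cast_pred (by omega), sub_add_cancel, Function.iterate_succ'] at h
  rw [peano]
  exact abs_integral_mul_le_mul_eVariationOn (by norm_num) hBV hKq.intervalIntegrable tail_bound
    (hKq.integral_eq_zero (by omega))

lemma iteratedDerivWithin_Icc_eq_add_integral {a b : ℝ} (hab : a < b) {f : ℝ → ℝ} {m k : ℕ}
    (hf : ContDiffOn ℝ m f (Set.Icc a b)) (hk : k < m) {t : ℝ} (ht : t ∈ Set.Icc a b) :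
    iteratedDerivWithin k f (Set.Icc a b) t = iteratedDerivWithin k f (Set.Icc a b) a +
      ∫ y in a..t, iteratedDerivWithin (k + 1) f (Set.Icc a b) y := by
  have hI := uniqueDiffOn_Icc hab
  have hsub : Set.Icc a t ⊆ Set.Icc a b := Set.Icc_subset_Icc_right ht.2
  have hderiv : ContinuousOn (iteratedDerivWithin (k + 1) f (Set.Icc a b)) (Set.Icc a b) :=
    hf.continuousOn_iteratedDerivWithin (by exact_mod_cast hk) hI
  have hdiff : DifferentiableOn ℝ (iteratedDerivWithin k f (Set.Icc a b)) (Set.Icc a b) :=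
    hf.differentiableOn_iteratedDerivWithin (by exact_mod_cast hk) hI
  rw [intervalIntegral.integral_eq_sub_of_hasDerivAt_of_le ht.1 (hdiff.continuousOn.mono hsub)
    (fun y hy => ?_) (hderiv.mono hsub |>.intervalIntegrable_of_Icc ht.1), add_sub_cancel]
  have hy' : y ∈ Set.Ioo a b := ⟨hy.1, hy.2.trans_le ht.2⟩
  rw [iteratedDerivWithin_succ]
  exact (hdiff y (Set.Ioo_subset_Icc_self hy')).hasDerivWithinAt.hasDerivAt
    (Icc_mem_nhds hy'.1 hy'.2)

lemma abs_lagBasis_le_sup' {n : ℕ} (x : Fin n → ℝ) (hn : (univ : Finset (Fin n)).Nonempty)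
    {I : Set ℝ} (hI : IsCompact I) {t : ℝ} (ht : t ∈ I) (j : Fin n) :
    |lagBasis x j t| ≤ univ.sup' hn (fun j => sSup ((fun t => |lagBasis x j t|) '' I)) := by
  refine le_trans (le_csSup (hI.bddAbove_image ?_) ⟨t, ht, rfl⟩) (le_sup' (fun j =>
    sSup ((fun t => |lagBasis x j t|) '' I)) (mem_univ j))
  unfold lagBasis
  fun_prop

lemma prod_pi_div_le {n r : ℕ} (hn : r + 1 ≤ n) :
    ∏ i ∈ range r, Real.pi / ((n : ℝ) - i) ≤
      Real.pi ^ r / ∏ i ∈ range r, ((n : ℝ) - 1 - i) := by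
  rw [← card_range r, ← prod_const, card_range, ← prod_div_distrib]
  have hpos : ∀ i ∈ range r, 0 < (n : ℝ) - 1 - i := fun i hi => by
    have : ((i + 1 + 1 : ℕ) : ℝ) ≤ n := by exact_mod_cast (by have := mem_range.1 hi; omega)
    push_cast at this
    linarith
  refine prod_le_prod (fun i hi => ?_) fun i hi => ?_
  · exact div_nonneg Real.pi_pos.le (by linarith [hpos i hi])
  · exact div_le_div_of_nonneg_left Real.pi_pos.le (hpos i hi) (by linarith)

theorem stmt16_general {n r : ℕ} (hr : 1 ≤ r) (hn : r + 1 ≤ n) {x : Fin n → ℝ} (hx : x.Injective)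
    (hmem : ∀ i, x i ∈ Set.Icc (-1 : ℝ) 1) {f g : ℝ → ℝ}
    (hf : ContDiffOn ℝ (r - 1) f (Set.Icc (-1) 1))
    (hBV : BoundedVariationOn g (Set.Icc (-1 : ℝ) 1))
    (hrep : ∀ t ∈ Set.Icc (-1 : ℝ) 1, iteratedDerivWithin (r - 1) f (Set.Icc (-1) 1) t =
      iteratedDerivWithin (r - 1) f (Set.Icc (-1) 1) (-1) + ∫ y in (-1 : ℝ)..t, g y)
    {t M : ℝ} (ht : t ∈ Set.Icc (-1 : ℝ) 1) (hM : ∀ j, |lagBasis x j t| ≤ M) :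
    |f t - lagInterp x f t| ≤ Real.pi ^ r * (eVariationOn g (Set.Icc (-1 : ℝ) 1)).toReal /
      (∏ i ∈ range r, ((n : ℝ) - 1 - i)) * M := by
  obtain ⟨q, rfl⟩ := Nat.exists_eq_add_of_le' hr
  rw [Nat.add_sub_cancel] at hrep
  set h := Function.update (fun i => iteratedDerivWithin i f (Set.Icc (-1) 1)) (q + 1) g
  have h_last : h (q + 1) = g := Function.update_self ..
  have h_of_le : ∀ i ≤ q, h i = iteratedDerivWithin i f (Set.Icc (-1) 1) := fun i hi =>
    Function.update_of_ne (by omega) ..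
  have h_zero : h 0 = f := (h_of_le 0 q.zero_le).trans iteratedDerivWithin_zero
  have hM0 : 0 ≤ M := (abs_nonneg _).trans (hM ⟨0, by omega⟩)
  have key := abs_sub_lagInterp_le_of_primitive_chain hr hn hx hmem (h_last.symm ▸ hBV)
    (fun i hi s hs => ?_) ht hM
  · rw [h_zero, h_last] at key
    refine key.trans ?_
    rw [mul_right_comm, mul_div_right_comm]
    gcongr
    exact prod_pi_div_le hn
  · rcases (Nat.le_of_lt_succ hi).eq_or_lt with rfl | hlt
    · rw [h_last, h_of_le i le_rfl]
      exact hrep s hs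
    · rw [h_of_le i hlt.le, h_of_le (i + 1) hlt]
      exact iteratedDerivWithin_Icc_eq_add_integral (by norm_num) (m := q) hf hlt hs

end ErrorEstimate

theorem stmt16 {n r : ℕ} (hr : 1 ≤ r) (hn : r + 1 ≤ n)
    (x : Fin n → ℝ)
    (hdec : ∀ i j : Fin n, i < j → x j < x i)
    (hmem : ∀ i, x i ∈ Set.Icc (-1 : ℝ) 1)
    (f g : ℝ → ℝ) (V : ℝ)
    (hf : ContDiff ℝ (r - 1) f)
    (hg : IntegrableOn g (Set.Icc (-1 : ℝ) 1))
    (hBV : BoundedVariationOn g (Set.Icc (-1 : ℝ) 1))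
    (hV : (eVariationOn g (Set.Icc (-1 : ℝ) 1)).toReal = V)
    (hrep : ∀ t ∈ Set.Icc (-1 : ℝ) 1,
      iteratedDeriv (r - 1) f t = iteratedDeriv (r - 1) f (-1) + ∫ y in (-1 : ℝ)..t, g y) :
    ∀ t ∈ Set.Icc (-1 : ℝ) 1,
      |f t - lagInterp x f t| ≤
        Real.pi ^ r * V / (∏ i ∈ Finset.range r, ((n : ℝ) - 1 - i)) *
          Finset.univ.sup' ⟨⟨0, by omega⟩, Finset.mem_univ _⟩
            (fun j => sSup ((fun t => |lagBasis x j t|) '' Set.Icc (-1 : ℝ) 1)) := by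
  have hderiv : Set.EqOn (iteratedDerivWithin (r - 1) f (Set.Icc (-1) 1)) (iteratedDeriv (r - 1) f)
      (Set.Icc (-1) 1) := fun s hs => iteratedDerivWithin_eq_iteratedDeriv
    (uniqueDiffOn_Icc (by norm_num)) (by exact_mod_cast hf.contDiffAt) hs
  exact fun t ht => hV ▸ stmt16_general hr hn (StrictAnti.injective fun i j => hdec i j) hmem
    hf.contDiffOn hBV (fun s hs => by rw [hderiv hs, hderiv (by norm_num), hrep s hs]) ht
    (abs_lagBasis_le_sup' x _ isCompact_Icc ht)
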